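/- Every function A : ℂ → ℂ meromorphic on ℂ satisfying the functional equation A(z) + A(z−1) = Γ(z+1) for every z ∈ ℂ at which A(z), A(z−1), and Γ(z+1) are all analytic, is differentially transcendental. -/

import Mathlib

/-- A function `f : ℂ → ℂ` (meromorphic on `ℂ`) is differentially algebraic over `ℂ(z)`:
there are `n ∈ ℕ` and a nonzero polynomial `P ∈ ℂ[X₀, …, X_{n+1}]` such that
`P (z, f z, f' z, …, f⁽ⁿ⁾ z) = 0` at every point `z` where `f` is analytic. -/
def DifferentiallyAlgebraic (f : ℂ → ℂ) : Prop :=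
  ∃ (n : ℕ) (P : MvPolynomial (Fin (n + 2)) ℂ),
    P ≠ 0 ∧ ∀ z : ℂ, AnalyticAt ℂ f z →
      MvPolynomial.eval
        (fun i : Fin (n + 2) => if i.val = 0 then z else iteratedDeriv (i.val - 1) f z) P = 0

section AlgPart

variable {k R : Type*} [Field k] [CharZero k] [CommRing R] [IsDomain R] [Algebra k R]

theorem ak_deriv_adjoin (D : Derivation k R R) (T : Set R)
    (hT : ∀ t ∈ T, IsAlgebraic (Algebra.adjoin k T) (D t)) (y : R)
    (hy : y ∈ Algebra.adjoin k T) : IsAlgebraic (Algebra.adjoin k T) (D y) := by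
  have hmem : ∀ x ∈ Algebra.adjoin k T, IsAlgebraic (Algebra.adjoin k T) x := fun x hx =>
    isAlgebraic_algebraMap (⟨x, hx⟩ : Algebra.adjoin k T)
  induction hy using Algebra.adjoin_induction with
  | mem x hx => exact hT x hx
  | algebraMap r => simpa using isAlgebraic_zero
  | add x y hx hy h1 h2 => simpa using h1.add h2
  | mul x y hx hy h1 h2 =>
    simpa using ((hmem x hx).mul h2).add ((hmem y hy).mul h1)

theorem ak_deriv_alg (D : Derivation k R R) (T : Set R)
    (hT : ∀ t ∈ T, IsAlgebraic (Algebra.adjoin k T) (D t)) (y : R)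
    (hy : IsAlgebraic (Algebra.adjoin k T) y) : IsAlgebraic (Algebra.adjoin k T) (D y) := by
  classical
  have hmem : ∀ x ∈ Algebra.adjoin k T, IsAlgebraic (Algebra.adjoin k T) x := fun x hx =>
    isAlgebraic_algebraMap (⟨x, hx⟩ : Algebra.adjoin k T)
  have key : ∀ f : Polynomial (Algebra.adjoin k T), IsAlgebraic (Algebra.adjoin k T)
      (D (Polynomial.aeval y f) - Polynomial.aeval y (Polynomial.derivative f) * D y) := by
    intro f
    induction f using Polynomial.induction_on' with
    | add p q hp hq =>
      convert hp.add hq using 1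
      simp only [map_add]; ring
    | monomial n a =>
      convert (ak_deriv_adjoin D T hT a a.2).mul (hy.pow n) using 1
      simp only [Polynomial.aeval_monomial, Polynomial.derivative_monomial, Derivation.leibniz,
        Derivation.leibniz_pow, map_mul, map_natCast, smul_eq_mul, nsmul_eq_mul]
      have : algebraMap (Algebra.adjoin k T) R a = (a : R) := rfl
      rw [this]; ring
  have hex : ∃ n, ∃ f : Polynomial (Algebra.adjoin k T), f ≠ 0 ∧ Polynomial.aeval y f = 0 ∧
      f.natDegree = n := by
    obtain ⟨f, h1, h2⟩ := hy
    exact ⟨_, f, h1, h2, rfl⟩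
  obtain ⟨f, hf0, hfy, hdeg⟩ := Nat.find_spec hex
  have hinj : Function.Injective (algebraMap (Algebra.adjoin k T) R) := Subtype.val_injective
  have : CharZero (Algebra.adjoin k T) := charZero_of_injective_algebraMap
    (FaithfulSMul.algebraMap_injective k _)
  have hpos : f.natDegree ≠ 0 := by
    intro h0
    rw [Polynomial.natDegree_eq_zero] at h0
    obtain ⟨c, rfl⟩ := h0
    rw [Polynomial.aeval_C] at hfy
    exact hf0 (by rw [hinj (hfy.trans (map_zero _).symm), map_zero])
  have hd : Polynomial.aeval y (Polynomial.derivative f) ≠ 0 := by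
    intro h0
    have hlt := Polynomial.natDegree_derivative_lt hpos
    rw [hdeg] at hlt
    refine Nat.find_min hex hlt ⟨_, ?_, h0, rfl⟩
    intro h
    exact hpos (Polynomial.derivative_eq_zero.mp h)
  have h1 := key f
  rw [hfy, map_zero, zero_sub] at h1
  have h2 := h1.neg
  rw [neg_neg] at h2
  refine IsAlgebraic.of_mul (mem_nonZeroDivisors_of_ne_zero hd) ?_ h2
  have h3 : ∀ f : Polynomial (Algebra.adjoin k T),
      Polynomial.aeval y f ∈ Subalgebra.algebraicClosure (Algebra.adjoin k T) R := by
    intro f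
    rw [Polynomial.aeval_eq_sum_range]
    exact Subalgebra.sum_mem _ fun i _ => Subalgebra.smul_mem _
      (Subalgebra.pow_mem _ (show y ∈ Subalgebra.algebraicClosure (Algebra.adjoin k T) R from hy) _) _
  exact h3 _

theorem ak_mono {S T : Set R} (h : S ⊆ T) {y : R} (hy : IsAlgebraic (Algebra.adjoin k S) y) :
    IsAlgebraic (Algebra.adjoin k T) y :=
  hy.adjoin_of_forall_isAlgebraic fun x hx =>
    (isAlgebraic_algebraMap (⟨x, Algebra.subset_adjoin (h hx.1)⟩ : Algebra.adjoin k T))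

theorem ak_iter (D : Derivation k R R) (T : Set R)
    (hT : ∀ t ∈ T, IsAlgebraic (Algebra.adjoin k T) (D t)) (y : R)
    (hy : IsAlgebraic (Algebra.adjoin k T) y) (n : ℕ) :
    IsAlgebraic (Algebra.adjoin k T) (D^[n] y) := by
  induction n with
  | zero => exact hy
  | succ n ih => rw [Function.iterate_succ_apply']; exact ak_deriv_alg D T hT _ ih

/-- A differentially algebraic element lives in a finitely generated differential closure. -/
theorem ak_finite (D : Derivation k R R) (ζ x : R) (hζ : Transcendental k ζ) (hD : D ζ = 1)
    (n : ℕ) (hdep : ¬ AlgebraicIndependent k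
      (fun i : Fin (n + 2) => if i.val = 0 then ζ else D^[i.val - 1] x)) :
    ∃ T : Set R, T.Finite ∧ (∀ t ∈ T, IsAlgebraic (Algebra.adjoin k T) (D t)) ∧
      IsAlgebraic (Algebra.adjoin k T) x := by
  classical
  set e : ℕ → R := fun i => if i = 0 then ζ else D^[i - 1] x with he
  have hex : ∃ m, ¬ Transcendental (Algebra.adjoin k (e '' Set.Iio m)) (e m) := by
    by_contra hcon
    push Not at hcon
    apply hdep
    have hall : ∀ m, AlgebraicIndepOn k e (Set.Iio m) := by
      intro m
      induction m with
      | zero =>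
        have : IsEmpty (Set.Iio 0 : Set ℕ) := by simp
        exact algebraicIndependent_empty_type_iff.mpr (FaithfulSMul.algebraMap_injective k R)
      | succ m ih =>
        have : (Set.Iio (m+1)) = insert m (Set.Iio m) := by
          ext i; simp
        rw [this]
        exact ih.insert (hcon m)
    exact (hall (n+2)).comp (fun i : Fin (n+2) => (⟨i.val, i.2⟩ : Set.Iio (n+2)))
      (fun i j h => Fin.ext (congrArg Subtype.val h))
  obtain ⟨m, hm⟩ := hex
  have hm' : IsAlgebraic (Algebra.adjoin k (e '' Set.Iio m)) (e m) := not_not.mp hm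
  have hm0 : m ≠ 0 := by
    rintro rfl
    apply hm
    have : e '' Set.Iio 0 = ∅ := by simp
    rw [this]
    intro h
    apply hζ
    have h0 : e 0 = ζ := by simp [he]
    rw [h0] at h
    obtain ⟨p, hp0, hp⟩ := h
    have hb : ∀ c : Algebra.adjoin k (∅ : Set R), ∃ r : k, algebraMap k R r = c := by
      intro c
      exact Algebra.mem_bot.mp ((Algebra.adjoin_empty k R) ▸ c.2 : (c : R) ∈ (⊥ : Subalgebra k R))
    have : Algebra.IsAlgebraic k (Algebra.adjoin k (∅ : Set R)) := by
      constructor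
      intro c
      obtain ⟨r, hr⟩ := hb c
      have : c = algebraMap k _ r := Subtype.ext hr.symm
      rw [this]
      exact isAlgebraic_algebraMap r
    exact IsAlgebraic.restrictScalars (S := Algebra.adjoin k (∅ : Set R)) k ⟨p, hp0, hp⟩
  have hmem : ∀ j < m, IsAlgebraic (Algebra.adjoin k (e '' Set.Iio m)) (e j) := fun j hj =>
    isAlgebraic_algebraMap (⟨e j, Algebra.subset_adjoin ⟨j, hj, rfl⟩⟩ :
      Algebra.adjoin k (e '' Set.Iio m))
  have hle : ∀ j ≤ m, IsAlgebraic (Algebra.adjoin k (e '' Set.Iio m)) (e j) := fun j hj => by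
    rcases hj.lt_or_eq with h | rfl
    · exact hmem j h
    · exact hm'
  refine ⟨e '' Set.Iio m, (Set.finite_Iio m).image e, ?_, ?_⟩
  · rintro _ ⟨j, hj, rfl⟩
    rcases Nat.eq_zero_or_pos j with rfl | hj0
    · simpa [he, hD] using isAlgebraic_one
    · have : D (e j) = e (j + 1) := by
        simp only [he, if_neg hj0.ne', if_neg (Nat.succ_ne_zero j), Nat.add_sub_cancel]
        rw [← Function.iterate_succ_apply' (f := D)]
        congr 2; omega
      rw [this]
      exact hle _ hj
  · have := hle 1 (by omega)
    simpa [he] using this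

theorem ak_dep_of_finite (T : Set R) (hT : T.Finite) : ∃ N : ℕ, ∀ v : Option (Fin N) → R,
    (∀ i, IsAlgebraic (Algebra.adjoin k T) (v i)) → ¬ AlgebraicIndependent k v := by
  refine ⟨hT.toFinset.card, fun v hv hind => ?_⟩
  set M := AlgebraicIndependent.matroid k R
  have h1 : M.Indep (Set.range v) := by
    rw [AlgebraicIndependent.matroid_indep_iff]
    exact AlgebraicIndependent.coe_range hind
  have h2 : Set.range v ⊆ M.closure T := by
    rw [AlgebraicIndependent.matroid_closure_eq]
    rintro _ ⟨i, rfl⟩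
    exact hv i
  have h3 : (Set.range v).encard ≤ M.eRk T := by
    rw [← h1.eRk_eq_encard, ← M.eRk_closure_eq T]
    exact M.eRk_mono h2
  have h4 := h3.trans (M.eRk_le_encard T)
  rw [← Set.image_univ, hind.injective.encard_image, Set.encard_univ, hT.encard_eq_coe_toFinset_card] at h4
  simp at h4
  norm_cast at h4
  omega

end AlgPart

section ShiftPart

open MvPolynomial

/-- All monomials of `P` have degree at most `d`. -/
def AkDL {ι K : Type*} [CommRing K] (d : ℤ) (P : MvPolynomial ι K) : Prop :=
  ∀ α : ι →₀ ℕ, coeff α P ≠ 0 → (α.degree : ℤ) ≤ d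

variable {ι K : Type*} [Field K]

theorem AkDL.add {d : ℤ} {P Q : MvPolynomial ι K} (hP : AkDL d P) (hQ : AkDL d Q) :
    AkDL d (P + Q) := by
  intro α h
  by_cases h1 : coeff α P = 0
  · by_cases h2 : coeff α Q = 0
    · simp [h1, h2] at h
    · exact hQ α h2
  · exact hP α h1

theorem AkDL.zero (d : ℤ) : AkDL d (0 : MvPolynomial ι K) := by
  intro α h; simp at h

theorem AkDL.neg {d : ℤ} {P : MvPolynomial ι K} (hP : AkDL d P) : AkDL d (-P) := by
  intro α h
  exact hP α (by simpa using h)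

theorem AkDL.sub {d : ℤ} {P Q : MvPolynomial ι K} (hP : AkDL d P) (hQ : AkDL d Q) :
    AkDL d (P - Q) := by
  rw [sub_eq_add_neg]; exact hP.add hQ.neg

theorem AkDL.mono {d e : ℤ} {P : MvPolynomial ι K} (hP : AkDL d P) (h : d ≤ e) : AkDL e P :=
  fun α ha => (hP α ha).trans h

theorem AkDL.C_mul {d : ℤ} {P : MvPolynomial ι K} (hP : AkDL d P) (c : K) :
    AkDL d (C c * P) := by
  intro α h
  refine hP α fun h0 => h ?_
  simp [coeff_C_mul, h0]

theorem AkDL.mul_X {d : ℤ} {P : MvPolynomial ι K} (hP : AkDL d P) (i : ι) :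
    AkDL (d + 1) (P * X i) := by
  classical
  intro α h
  rw [coeff_mul_X'] at h
  split_ifs at h with hi
  · have := hP _ h
    have h2 : α = (α - Finsupp.single i 1) + Finsupp.single i 1 := by
      rw [tsub_add_cancel_of_le]
      rw [Finsupp.single_le_iff]
      exact Nat.one_le_iff_ne_zero.mpr (Finsupp.mem_support_iff.mp hi)
    rw [h2, map_add, Finsupp.degree_single]
    push_cast; linarith
  · exact absurd rfl h

theorem AkDL.of_mul_X {d : ℤ} {P : MvPolynomial ι K} {i : ι} (h : AkDL d (P * X i)) :
    AkDL (d - 1) P := by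
  intro α ha
  have := h (α + Finsupp.single i 1) (by rwa [coeff_mul_X])
  rw [map_add, Finsupp.degree_single] at this
  push_cast at this; linarith

theorem AkDL.sum {d : ℤ} {κ : Type*} (s : Finset κ) (f : κ → MvPolynomial ι K)
    (h : ∀ i ∈ s, AkDL d (f i)) : AkDL d (∑ i ∈ s, f i) := by
  classical
  induction s using Finset.induction_on with
  | empty => simpa using AkDL.zero d
  | insert a s ha ih =>
    rw [Finset.sum_insert ha]
    exact (h a (by simp)).add (ih fun i hi => h i (by simp [hi]))

theorem AkDL.map {d : ℤ} {P : MvPolynomial ι K} (hP : AkDL d P) (σ : K →+* K) :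
    AkDL d (MvPolynomial.map σ P) := by
  intro α h
  refine hP α fun h0 => h ?_
  simp [coeff_map, h0]

variable [Fintype ι] (σ : K →+* K) (r : ι → K)

/-- The twisted translation. -/
noncomputable def akTau : MvPolynomial ι K →+* MvPolynomial ι K :=
  eval₂Hom (C.comp σ) (fun i => X i + C (r i))

theorem akTau_expand_mono (s : ι →₀ ℕ) (a : K) : ∀ d : ℤ, AkDL d (monomial s a) →
    AkDL (d - 1) (akTau σ r (monomial s a) - MvPolynomial.map σ (monomial s a)) ∧
    AkDL (d - 2) (akTau σ r (monomial s a) - MvPolynomial.map σ (monomial s a) -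
      ∑ i, C (r i) * pderiv i (MvPolynomial.map σ (monomial s a))) := by
  classical
  refine induction_on_monomial (motive := fun p => ∀ d : ℤ, AkDL d p →
    AkDL (d - 1) (akTau σ r p - MvPolynomial.map σ p) ∧
    AkDL (d - 2) (akTau σ r p - MvPolynomial.map σ p -
      ∑ i, C (r i) * pderiv i (MvPolynomial.map σ p))) ?_ ?_ s a
  · intro a d _
    have h : akTau σ r (C a) - MvPolynomial.map σ (C a) = 0 := by
      simp [akTau]
    have h2 : ∑ i, C (r i) * pderiv i (MvPolynomial.map σ (C a : MvPolynomial ι K)) = 0 := by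
      simp
    rw [h, h2, sub_zero]
    exact ⟨AkDL.zero _, AkDL.zero _⟩
  · intro p n ih d hd
    have hp := hd.of_mul_X
    obtain ⟨h1, h2⟩ := ih _ hp
    have hp' := hp.map σ
    have hX : akTau σ r (p * X n) = akTau σ r p * (X n + C (r n)) := by
      rw [map_mul]; congr 1; simp [akTau]
    have hmX : MvPolynomial.map σ (p * X n) = MvPolynomial.map σ p * X n := by simp
    have hs : ∑ i, C (r i) * pderiv i (MvPolynomial.map σ p * X n) =
        (∑ i, C (r i) * pderiv i (MvPolynomial.map σ p)) * X n
          + C (r n) * MvPolynomial.map σ p := by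
      have : ∀ i, C (r i) * pderiv i (MvPolynomial.map σ p * X n) =
          (C (r i) * pderiv i (MvPolynomial.map σ p)) * X n +
          (if i = n then C (r n) * MvPolynomial.map σ p else 0) := by
        intro i
        rw [pderiv_mul]
        split_ifs with h
        · subst h; rw [pderiv_X_self]; ring
        · rw [pderiv_X_of_ne (Ne.symm h)]; ring
      rw [Finset.sum_congr rfl fun i _ => this i, Finset.sum_add_distrib, Finset.sum_mul]
      simp
    have ht : AkDL (d - 1) (akTau σ r p) := by
      have := (h1.mono (by linarith : d - 1 - 1 ≤ d - 1)).add hp'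
      simpa using this
    rw [hX, hmX, hs]
    constructor
    · have e : akTau σ r p * (X n + C (r n)) - MvPolynomial.map σ p * X n =
        (akTau σ r p - MvPolynomial.map σ p) * X n + C (r n) * akTau σ r p := by ring
      rw [e]
      exact ((h1.mul_X n).mono (by linarith)).add (ht.C_mul _)
    · have e : akTau σ r p * (X n + C (r n)) - MvPolynomial.map σ p * X n -
        ((∑ i, C (r i) * pderiv i (MvPolynomial.map σ p)) * X n
          + C (r n) * MvPolynomial.map σ p) =
        (akTau σ r p - MvPolynomial.map σ p -
          ∑ i, C (r i) * pderiv i (MvPolynomial.map σ p)) * X n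
        + C (r n) * (akTau σ r p - MvPolynomial.map σ p) := by ring
      rw [e]
      exact ((h2.mul_X n).mono (by linarith)).add ((h1.C_mul _).mono (by linarith))

theorem akTau_expand (P : MvPolynomial ι K) (d : ℤ) (hP : AkDL d P) :
    AkDL (d - 1) (akTau σ r P - MvPolynomial.map σ P) ∧
    AkDL (d - 2) (akTau σ r P - MvPolynomial.map σ P -
      ∑ i, C (r i) * pderiv i (MvPolynomial.map σ P)) := by
  classical
  have hm : ∀ s ∈ P.support, AkDL d (monomial s (coeff s P)) := by
    intro s hs α hα
    rw [coeff_monomial] at hα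
    split_ifs at hα with h
    · subst h; exact hP _ hα
    · exact absurd rfl hα
  have h := fun s hs => akTau_expand_mono σ r s (coeff s P) d (hm s hs)
  have h1 := AkDL.sum _ _ fun s hs => (h s hs).1
  have h2 := AkDL.sum _ _ fun s hs => (h s hs).2
  rw [Finset.sum_sub_distrib, ← map_sum, ← map_sum, ← P.as_sum] at h1
  rw [Finset.sum_sub_distrib, Finset.sum_sub_distrib, ← map_sum, ← map_sum, ← P.as_sum,
    Finset.sum_comm] at h2
  simp_rw [← Finset.mul_sum, ← map_sum] at h2
  rw [← P.as_sum] at h2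
  exact ⟨h1, h2⟩

theorem akTau_coeff_top (P : MvPolynomial ι K) (d : ℕ) (hP : AkDL d P) (α : ι →₀ ℕ)
    (hα : α.degree = d) : coeff α (akTau σ r P) = σ (coeff α P) := by
  by_contra h
  have := (akTau_expand σ r P d hP).1 α (by rw [coeff_sub, coeff_map]; exact sub_ne_zero.mpr h)
  rw [hα] at this; linarith

theorem akTau_coeff_next (P : MvPolynomial ι K) (d : ℕ) (hP : AkDL d P) (μ : ι →₀ ℕ)
    (hμ : μ.degree + 1 = d) : coeff μ (akTau σ r P) = σ (coeff μ P) +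
      ∑ i, r i * (σ (coeff (μ + Finsupp.single i 1) P) * (μ i + 1)) := by
  by_contra h
  have := (akTau_expand σ r P d hP).2 μ (by
    rw [coeff_sub, coeff_sub, coeff_map, coeff_sum]
    simp_rw [coeff_C_mul, coeff_pderiv, coeff_map]
    intro h0
    apply h
    linear_combination h0)
  rw [← hμ] at this; push_cast at this; linarith

theorem ak_shift_main [CharZero K] (I : Ideal (MvPolynomial ι K)) (hbot : I ≠ ⊥) (htop : I ≠ ⊤)
    (hI : ∀ P ∈ I, akTau σ r P ∈ I) :
    ∃ c : ι → K, (∀ i, σ (c i) = c i) ∧ c ≠ 0 ∧ ∃ u : K, σ u - u = ∑ i, c i * r i := by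
  classical
  have hex : ∃ d : ℕ, ∃ P ∈ I, P ≠ 0 ∧ AkDL d P := by
    obtain ⟨P, hP, h0⟩ := Submodule.exists_mem_ne_zero_of_ne_bot hbot
    refine ⟨P.totalDegree, P, hP, h0, fun α hα => ?_⟩
    exact_mod_cast le_totalDegree (mem_support_iff.mpr hα)
  set d := Nat.find hex with hd
  have hmin : ∀ Q ∈ I, AkDL ((d : ℤ) - 1) Q → Q = 0 := by
    intro Q hQ hdl
    by_contra h0
    rcases Nat.eq_zero_or_pos d with hd0 | hd0
    · apply h0
      ext α
      by_contra hα
      have := hdl α (by simpa using hα)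
      rw [hd0] at this
      push_cast at this
      omega
    · refine Nat.find_min hex (m := d - 1) (by omega) ⟨Q, hQ, h0, ?_⟩
      rw [Nat.cast_sub hd0]; exact_mod_cast hdl
  let top : MvPolynomial ι K → Finset (ι →₀ ℕ) := fun P =>
    P.support.filter (fun α => α.degree = d)
  have hex2 : ∃ N : ℕ, ∃ P ∈ I, P ≠ 0 ∧ AkDL d P ∧ (top P).card = N := by
    obtain ⟨P, h1, h2, h3⟩ := Nat.find_spec hex
    exact ⟨_, P, h1, h2, h3, rfl⟩
  obtain ⟨P0, hP0I, hP00, hP0d, hP0c⟩ := Nat.find_spec hex2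
  have htopne : ∃ α, α.degree = d ∧ coeff α P0 ≠ 0 := by
    by_contra hcon
    push Not at hcon
    apply hP00
    apply hmin P0 hP0I
    intro α hα
    have h1 := hP0d α hα
    have h2 : α.degree ≠ d := fun h => hα (hcon α h)
    have : (α.degree : ℤ) ≠ d := by exact_mod_cast h2
    omega
  obtain ⟨α₀, hα₀d, hα₀⟩ := htopne
  set P := C (coeff α₀ P0)⁻¹ * P0 with hPdef
  have hPI : P ∈ I := I.mul_mem_left _ hP0I
  have hPd : AkDL d P := hP0d.C_mul _
  have hP1 : coeff α₀ P = 1 := by rw [hPdef, coeff_C_mul, inv_mul_cancel₀ hα₀]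
  have hinv : akTau σ r P = P := by
    by_contra hne
    have hQI : akTau σ r P - P ∈ I := I.sub_mem (hI P hPI) hPI
    have hτ : AkDL d (akTau σ r P) := by
      have := ((akTau_expand σ r P d hPd).1.mono (by linarith : (d : ℤ) - 1 ≤ d)).add (hPd.map σ)
      simpa using this
    have hQd : AkDL d (akTau σ r P - P) := hτ.sub hPd
    have hlt : (top (akTau σ r P - P)).card < Nat.find hex2 := by
      rw [← hP0c]
      apply Finset.card_lt_card
      rw [Finset.ssubset_iff_of_subset]
      · refine ⟨α₀, by simp [top, hα₀, hα₀d], ?_⟩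
        simp only [top, Finset.mem_filter, mem_support_iff, not_and]
        intro h
        exfalso
        apply h
        rw [coeff_sub, akTau_coeff_top σ r P d hPd α₀ hα₀d, hP1, map_one, sub_self]
      · intro α hα
        simp only [top, Finset.mem_filter, mem_support_iff] at hα ⊢
        refine ⟨fun h0 => hα.1 ?_, hα.2⟩
        have : coeff α P = 0 := by rw [hPdef, coeff_C_mul, h0, mul_zero]
        rw [coeff_sub, akTau_coeff_top σ r P d hPd α hα.2, this, map_zero, sub_self]
    exact Nat.find_min hex2 hlt ⟨_, hQI, sub_ne_zero.mpr hne, hQd, rfl⟩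
  have hfix : ∀ α, α.degree = d → σ (coeff α P) = coeff α P := by
    intro α hα
    rw [← akTau_coeff_top σ r P d hPd α hα, hinv]
  have hane : α₀ ≠ 0 := by
    rintro rfl
    have hd0 : d = 0 := by rw [← hα₀d]; simp
    apply htop
    have : P = 1 := by
      ext α
      by_cases h : α = 0
      · subst h; rw [hP1]; simp
      · rw [coeff_one, if_neg (Ne.symm h)]
        by_contra hc
        have := hPd α hc
        rw [hd0] at this
        have h2 : α.degree = 0 := by exact_mod_cast le_antisymm this (by positivity)
        exact h ((Finsupp.degree_eq_zero_iff α).mp h2)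
    rw [Ideal.eq_top_iff_one, ← this]
    exact hPI
  obtain ⟨j, hj⟩ : ∃ j, α₀ j ≠ 0 := by
    by_contra hcon
    push Not at hcon
    exact hane (Finsupp.ext hcon)
  set μ := α₀ - Finsupp.single j 1 with hμ
  have hμj : μ + Finsupp.single j 1 = α₀ := by
    rw [hμ, tsub_add_cancel_of_le]
    rw [Finsupp.single_le_iff]
    exact Nat.one_le_iff_ne_zero.mpr hj
  have hμd : μ.degree + 1 = d := by
    rw [← hα₀d, ← hμj, map_add, Finsupp.degree_single]
  have hdegi : ∀ i, (μ + Finsupp.single i 1).degree = d := by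
    intro i; rw [map_add, Finsupp.degree_single, hμd]
  have hmain := akTau_coeff_next σ r P d hPd μ hμd
  rw [hinv] at hmain
  refine ⟨fun i => -(coeff (μ + Finsupp.single i 1) P * (μ i + 1)), ?_, ?_, coeff μ P, ?_⟩
  · intro i
    simp [hfix _ (hdegi i)]
  · intro h
    have := congrFun h j
    rw [hμj, hP1] at this
    simp only [one_mul, Pi.zero_apply, neg_eq_zero] at this
    exact Nat.cast_add_one_ne_zero (μ j) this
  · simp_rw [hfix _ (hdegi _)] at hmain
    have : ∑ i, -(coeff (μ + Finsupp.single i 1) P * (μ i + 1)) * r i =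
      - ∑ i, r i * (coeff (μ + Finsupp.single i 1) P * (μ i + 1)) := by
      rw [← Finset.sum_neg_distrib]
      exact Finset.sum_congr rfl fun i _ => by ring
    rw [this]
    linear_combination -hmain

end ShiftPart

section RatPart

open Polynomial Filter

/-- Shift on polynomials. -/
noncomputable def akS : ℂ[X] →+* ℂ[X] := Polynomial.compRingHom (X + 1)

theorem akS_eval (p : ℂ[X]) (w : ℂ) : (akS p).eval w = p.eval (w + 1) := by
  simp [akS, Polynomial.eval_comp]

theorem akS_surj (p : ℂ[X]) : akS (p.comp (X - 1)) = p := by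
  simp [akS, Polynomial.comp_assoc]

theorem akS_inj : Function.Injective akS := by
  intro p q h
  apply Polynomial.funext
  intro w
  have := congrArg (Polynomial.eval (w - 1)) h
  simpa [akS_eval] using this

/-- Shift on rational functions. -/
noncomputable def akSig : RatFunc ℂ →+* RatFunc ℂ :=
  IsFractionRing.map (A := ℂ[X]) (B := ℂ[X]) (j := akS) akS_inj

theorem akSig_alg (p : ℂ[X]) :
    akSig (algebraMap ℂ[X] (RatFunc ℂ) p) = algebraMap ℂ[X] (RatFunc ℂ) (akS p) := by
  simp [akSig, IsFractionRing.map]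

theorem ak_alg_inj : Function.Injective (algebraMap ℂ[X] (RatFunc ℂ)) :=
  IsFractionRing.injective _ _

theorem ak_frac (u : RatFunc ℂ) : ∃ a b : ℂ[X], b ≠ 0 ∧
    u * algebraMap ℂ[X] (RatFunc ℂ) b = algebraMap ℂ[X] (RatFunc ℂ) a := by
  refine ⟨u.num, u.denom, u.denom_ne_zero, ?_⟩
  have h : algebraMap ℂ[X] (RatFunc ℂ) u.denom ≠ 0 := by
    intro h; exact u.denom_ne_zero (ak_alg_inj (by rw [h, map_zero]))
  have h2 := RatFunc.num_div_denom u
  rw [div_eq_iff h] at h2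
  exact h2.symm

theorem ak_ev_ne (b : ℂ[X]) (hb : b ≠ 0) : ∀ᶠ m : ℕ in atTop, b.eval (m : ℂ) ≠ 0 := by
  have hfin : {m : ℕ | b.eval (m : ℂ) = 0}.Finite := by
    have : Set.Finite {x : ℂ | b.IsRoot x} := Polynomial.finite_setOfPred_isRoot hb
    exact this.preimage (Nat.cast_injective.injOn)
  have := hfin.compl_mem_cofinite
  rw [Nat.cofinite_eq_atTop] at this
  exact this

theorem ak_fixed (c : RatFunc ℂ) (hc : akSig c = c) :
    ∃ l : ℂ, c = algebraMap ℂ[X] (RatFunc ℂ) (Polynomial.C l) := by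
  obtain ⟨a, b, hb, hab⟩ := ak_frac c
  have h1 := congrArg akSig hab
  rw [map_mul, hc, akSig_alg, akSig_alg] at h1
  have h2 : a * akS b = b * akS a := by
    apply ak_alg_inj
    rw [map_mul, map_mul, ← hab, ← h1]; ring
  obtain ⟨k, hk⟩ := eventually_atTop.mp (ak_ev_ne b hb)
  set l := a.eval (k : ℂ) / b.eval (k : ℂ)
  have h3 : ∀ j : ℕ, a.eval ((k + j : ℕ) : ℂ) = l * b.eval ((k + j : ℕ) : ℂ) := by
    intro j
    induction j with
    | zero => simp only [add_zero, l]; rw [div_mul_cancel₀]; exact hk k le_rfl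
    | succ j ih =>
      have := congrArg (Polynomial.eval ((k + j : ℕ) : ℂ)) h2
      rw [eval_mul, eval_mul, akS_eval, akS_eval, ih] at this
      have hne := hk (k + j) (by omega)
      have e : (((k + (j + 1) : ℕ)) : ℂ) = ((k + j : ℕ) : ℂ) + 1 := by push_cast; ring
      rw [e]
      apply mul_left_cancel₀ hne
      linear_combination -this
  have h4 : a = Polynomial.C l * b := by
    by_contra hne
    obtain ⟨m, hm⟩ := eventually_atTop.mp (ak_ev_ne (a - Polynomial.C l * b) (sub_ne_zero.mpr hne))
    apply hm (k + m) (by omega)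
    rw [eval_sub, eval_mul, eval_C, h3, sub_self]
  refine ⟨l, ?_⟩
  have hb' : algebraMap ℂ[X] (RatFunc ℂ) b ≠ 0 := by
    intro h; exact hb (ak_alg_inj (by rw [h, map_zero]))
  apply mul_right_cancel₀ hb'
  rw [hab, h4, map_mul]

/-- Regularity of a rational function at a point. -/
def AkReg (w : ℂ) (u : RatFunc ℂ) : Prop :=
  ∃ a b : ℂ[X], b.eval w ≠ 0 ∧
    u * algebraMap ℂ[X] (RatFunc ℂ) b = algebraMap ℂ[X] (RatFunc ℂ) a

theorem AkReg.add {w : ℂ} {u v : RatFunc ℂ} (hu : AkReg w u) (hv : AkReg w v) :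
    AkReg w (u + v) := by
  obtain ⟨a, b, hb, h⟩ := hu
  obtain ⟨a', b', hb', h'⟩ := hv
  refine ⟨a * b' + a' * b, b * b', by rw [eval_mul]; exact mul_ne_zero hb hb', ?_⟩
  simp only [map_add, map_mul, ← h, ← h']; ring

theorem AkReg.neg {w : ℂ} {u : RatFunc ℂ} (hu : AkReg w u) : AkReg w (-u) := by
  obtain ⟨a, b, hb, h⟩ := hu
  exact ⟨-a, b, hb, by rw [map_neg, ← h]; ring⟩

theorem akReg_shift (w : ℂ) (u : RatFunc ℂ) : AkReg w (akSig u) ↔ AkReg (w + 1) u := by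
  constructor
  · rintro ⟨a, b, hb, h⟩
    refine ⟨a.comp (X - 1), b.comp (X - 1), by simpa [eval_comp] using hb, ?_⟩
    apply akSig.injective
    rw [map_mul, akSig_alg, akSig_alg, akS_surj, akS_surj, h]
  · rintro ⟨a, b, hb, h⟩
    refine ⟨akS a, akS b, by rwa [akS_eval], ?_⟩
    rw [← akSig_alg, ← akSig_alg, ← h, map_mul]

theorem ak_no_telescope (u v : RatFunc ℂ) (q : ℂ[X]) (N : ℕ) (hq : q.eval (-1) ≠ 0)
    (hv : v * algebraMap ℂ[X] (RatFunc ℂ) ((X + 1) ^ (N + 1)) = algebraMap ℂ[X] (RatFunc ℂ) q)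
    (h : akSig u - u = v) : False := by
  have hreg : ∀ w : ℂ, w ≠ -1 → AkReg w v := by
    intro w hw
    refine ⟨q, (X + 1) ^ (N + 1), ?_, hv⟩
    rw [eval_pow]
    apply pow_ne_zero
    simp only [eval_add, eval_X, eval_one]
    intro h0; exact hw (by linear_combination h0)
  have hnreg : ¬ AkReg (-1) v := by
    rintro ⟨a, b, hb, h'⟩
    have : q * b = (X + 1) ^ (N + 1) * a := by
      apply ak_alg_inj
      rw [map_mul, map_mul, ← hv, ← h']; ring
    have := congrArg (Polynomial.eval (-1 : ℂ)) this
    simp at this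
    exact this.elim hq hb
  have hstep : ∀ w : ℂ, w ≠ -1 → (AkReg w u ↔ AkReg (w + 1) u) := by
    intro w hw
    rw [← akReg_shift]
    constructor
    · intro h1
      have := h1.add (hreg w hw)
      rwa [← h, add_sub_cancel] at this
    · intro h1
      have := h1.add (hreg w hw).neg
      rwa [← h, neg_sub, add_sub_cancel] at this
  obtain ⟨a, b, hb, hab⟩ := ak_frac u
  have hfin : Set.Finite {x : ℂ | b.IsRoot x} := Polynomial.finite_setOfPred_isRoot hb
  have hroot : ∀ w, ¬ AkReg w u → b.IsRoot w := by
    intro w hw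
    by_contra h1
    exact hw ⟨a, b, h1, hab⟩
  by_cases h0 : AkReg 0 u
  · have h1 : ¬ AkReg (-1) u := by
      intro h1
      apply hnreg
      rw [← h, sub_eq_add_neg]
      refine AkReg.add ?_ h1.neg
      rw [akReg_shift]; simpa using h0
    have hall : ∀ m : ℕ, ¬ AkReg (-1 - (m : ℂ)) u := by
      intro m
      induction m with
      | zero => simpa using h1
      | succ m ih =>
        rw [hstep _ ?_]
        · convert ih using 2; push_cast; ring
        · intro h2
          have : ((m : ℂ) + 1) = 0 := by push_cast at h2; linear_combination -h2
          exact Nat.cast_add_one_ne_zero m this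
    refine Set.infinite_of_injective_forall_mem (f := fun m : ℕ => (-1 - (m : ℂ))) ?_
      (fun m => hroot _ (hall m)) hfin
    intro m n hmn
    simpa using hmn
  · have hall : ∀ m : ℕ, ¬ AkReg (m : ℂ) u := by
      intro m
      induction m with
      | zero => simpa using h0
      | succ m ih =>
        push_cast
        rwa [← hstep]
        intro h2
        have : ((m : ℂ) + 1) = 0 := by linear_combination h2
        exact Nat.cast_add_one_ne_zero m this
    exact Set.infinite_of_injective_forall_mem (f := fun m : ℕ => (m : ℂ)) Nat.cast_injective
      (fun m => hroot _ (hall m)) hfin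

/-- The rational functions `(d/dz)^i (1/(z+1))`. -/
noncomputable def akR (i : ℕ) : RatFunc ℂ :=
  algebraMap ℂ[X] (RatFunc ℂ) (Polynomial.C ((-1) ^ i * (i.factorial : ℂ))) /
    algebraMap ℂ[X] (RatFunc ℂ) ((X + 1) ^ (i + 1))

theorem ak_X1 : (X + 1 : ℂ[X]) ≠ 0 := Polynomial.X_add_C_ne_zero 1

theorem ak_X1' : algebraMap ℂ[X] (RatFunc ℂ) (X + 1) ≠ 0 := by
  intro h; exact ak_X1 (ak_alg_inj (by rw [h, map_zero]))

theorem ak_rat_contra (n : ℕ) (c : Fin n → RatFunc ℂ) (hc : ∀ i, akSig (c i) = c i) (h0 : c ≠ 0)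
    (u : RatFunc ℂ) (h : akSig u - u = ∑ i, c i * akR i) : False := by
  classical
  choose l hl using fun i => ak_fixed (c i) (hc i)
  have hne : (Finset.univ.filter fun i => l i ≠ 0).Nonempty := by
    by_contra hcon
    rw [Finset.not_nonempty_iff_eq_empty, Finset.filter_eq_empty_iff] at hcon
    apply h0
    funext i
    have : l i = 0 := by simpa using hcon (Finset.mem_univ i)
    simp [hl i, this]
  obtain ⟨j, hj, hmax⟩ := Finset.exists_max_image _ (fun i : Fin n => i) hne
  have hj0 : l j ≠ 0 := by simpa using hj
  have hzero : ∀ i, j < i → l i = 0 := by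
    intro i hi
    by_contra hne
    exact absurd (hmax i (by simpa using hne)) (not_le.mpr hi)
  set q : ℂ[X] := ∑ i : Fin n, Polynomial.C (l i * ((-1) ^ (i : ℕ) * ((i : ℕ).factorial : ℂ))) *
    (X + 1) ^ ((j : ℕ) - (i : ℕ)) with hq
  refine ak_no_telescope u _ q j ?_ ?_ h
  · rw [hq, eval_finsetSum, Finset.sum_eq_single j]
    · simp [hj0, Nat.factorial_ne_zero]
    · intro i _ hij
      rcases lt_or_gt_of_ne hij with h1 | h1
      · have : (j : ℕ) - i ≠ 0 := by have : (i : ℕ) < j := h1; omega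
        simp [this]
      · simp [hzero i h1]
    · simp
  · rw [hq, map_sum, Finset.sum_mul]
    apply Finset.sum_congr rfl
    intro i _
    rw [hl i]
    by_cases h1 : j < i
    · simp [hzero i h1]
    · have h2 : (j : ℕ) + 1 = ((i : ℕ) + 1) + ((j : ℕ) - i) := by
        have : (i : ℕ) ≤ j := not_lt.mp h1
        omega
      rw [h2, pow_add, akR]
      have hx := ak_X1'
      simp only [map_mul, map_pow]
      field_simp

end RatPart

section GermPart

open Filter

/-- Germs at infinity of sequences. -/
abbrev AkL := Germ (atTop : Filter ℕ) ℂ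

/-- Shift of germs. -/
noncomputable def akShift : AkL →+* AkL where
  toFun f := f.compTendsto (fun m : ℕ => m + 1) (tendsto_add_atTop_nat 1)
  map_one' := rfl
  map_zero' := rfl
  map_mul' f g := by
    induction f using Germ.inductionOn with | _ f =>
    induction g using Germ.inductionOn with | _ g => rfl
  map_add' f g := by
    induction f using Germ.inductionOn with | _ f =>
    induction g using Germ.inductionOn with | _ g => rfl

theorem akShift_coe (f : ℕ → ℂ) : akShift (f : AkL) = ((fun m => f (m + 1) : ℕ → ℂ) : AkL) := rfl

/-- Sequences attached to polynomials. -/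
noncomputable def akEps : Polynomial ℂ →+* AkL :=
  (Germ.coeRingHom atTop).comp (RingHom.pi fun m : ℕ => Polynomial.evalRingHom (m : ℂ))

theorem akEps_apply (p : Polynomial ℂ) : akEps p = ((fun m : ℕ => p.eval (m : ℂ)) : AkL) := rfl

theorem akEps_unit (y : nonZeroDivisors (Polynomial ℂ)) : IsUnit (akEps y) := by
  have hy := ak_ev_ne y (nonZeroDivisors.ne_zero y.2)
  refine IsUnit.of_mul_eq_one (((fun m : ℕ => ((y : Polynomial ℂ).eval (m : ℂ))⁻¹) : ℕ → ℂ) : AkL) ?_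
  rw [akEps_apply]
  refine Germ.coe_eq.mpr ?_
  filter_upwards [hy] with m hm
  simp [hm]

/-- Germs attached to rational functions. -/
noncomputable def akIota : RatFunc ℂ →+* AkL :=
  IsLocalization.lift (M := nonZeroDivisors (Polynomial ℂ)) akEps_unit

theorem akIota_alg (p : Polynomial ℂ) :
    akIota (algebraMap (Polynomial ℂ) (RatFunc ℂ) p) = akEps p := by
  simp [akIota]

theorem akIota_sig (u : RatFunc ℂ) : akIota (akSig u) = akShift (akIota u) := by
  have : akIota.comp akSig = akShift.comp akIota := by
    apply IsLocalization.ringHom_ext (nonZeroDivisors (Polynomial ℂ))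
    refine RingHom.ext fun p => ?_
    simp only [RingHom.comp_apply, akSig_alg, akIota_alg]
    rw [akEps_apply, akEps_apply, akShift_coe]
    congr 1
    funext m
    rw [akS_eval]; push_cast; rfl
  exact congrArg (fun f => f u) this

theorem akIota_R (i : ℕ) : akIota (akR i) =
    ((fun m : ℕ => (-1) ^ i * (i.factorial : ℂ) / ((m : ℂ) + 1) ^ (i + 1)) : ℕ → ℂ) := by
  have h : akR i * algebraMap (Polynomial ℂ) (RatFunc ℂ) ((Polynomial.X + 1) ^ (i + 1)) =
    algebraMap (Polynomial ℂ) (RatFunc ℂ) (Polynomial.C ((-1) ^ i * (i.factorial : ℂ))) := by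
    have := ak_X1'
    rw [akR, div_mul_cancel₀]
    rw [map_pow]
    exact pow_ne_zero _ this
  have h2 := congrArg akIota h
  rw [map_mul, akIota_alg, akIota_alg] at h2
  have hu : IsUnit (akEps ((Polynomial.X + 1) ^ (i + 1))) :=
    akEps_unit ⟨_, mem_nonZeroDivisors_of_ne_zero (pow_ne_zero _ ak_X1)⟩
  apply hu.mul_right_cancel
  rw [h2, akEps_apply, akEps_apply]
  refine Germ.coe_eq.mpr (Eventually.of_forall fun m => ?_)
  have : ((m : ℂ) + 1) ≠ 0 := Nat.cast_add_one_ne_zero m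
  simp [this]

theorem ak_holder (N : ℕ) (y : Fin N → ℕ → ℂ)
    (hy : ∀ i : Fin N, ∀ᶠ m : ℕ in atTop,
      y i (m + 1) = y i m + (-1) ^ (i : ℕ) * ((i : ℕ).factorial : ℂ) / ((m : ℂ) + 1) ^ ((i : ℕ) + 1))
    (P : MvPolynomial (Option (Fin N)) ℂ) (hP : P ≠ 0)
    (hev : ∀ᶠ m : ℕ in atTop,
      MvPolynomial.aeval (fun o : Option (Fin N) => o.elim (m : ℂ) (fun i => y i m)) P = 0) :
    False := by
  classical
  set ev : MvPolynomial (Fin N) (RatFunc ℂ) →+* AkL :=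
    MvPolynomial.eval₂Hom akIota (fun i => ((y i : ℕ → ℂ) : AkL)) with hevdef
  set Q : MvPolynomial (Fin N) (RatFunc ℂ) :=
    MvPolynomial.map (algebraMap (Polynomial ℂ) (RatFunc ℂ)) (MvPolynomial.optionEquivRight ℂ (Fin N) P)
    with hQ
  have hQ0 : Q ≠ 0 := by
    intro h
    apply hP
    have h1 := MvPolynomial.map_injective _ ak_alg_inj (h.trans (map_zero _).symm)
    exact (MvPolynomial.optionEquivRight ℂ (Fin N)).injective (h1.trans (map_zero _).symm)
  have hevQ : ∀ P : MvPolynomial (Option (Fin N)) ℂ,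
      ev (MvPolynomial.map (algebraMap (Polynomial ℂ) (RatFunc ℂ))
        (MvPolynomial.optionEquivRight ℂ (Fin N) P)) =
      ((fun m : ℕ => MvPolynomial.aeval
        (fun o : Option (Fin N) => o.elim (m : ℂ) (fun i => y i m)) P : ℕ → ℂ) : AkL) := by
    intro P
    induction P using MvPolynomial.induction_on with
    | C a =>
      rw [MvPolynomial.optionEquivRight_C, MvPolynomial.map_C, hevdef, MvPolynomial.coe_eval₂Hom,
        MvPolynomial.eval₂_C, akIota_alg, akEps_apply]
      simp
    | add p q hp hq =>
      simp only [map_add, hp, hq]; rfl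
    | mul_X p o hp =>
      simp only [map_mul, hp]
      have : ev (MvPolynomial.map (algebraMap (Polynomial ℂ) (RatFunc ℂ))
        (MvPolynomial.optionEquivRight ℂ (Fin N) (MvPolynomial.X o))) =
        ((fun m : ℕ => o.elim (m : ℂ) (fun i => y i m) : ℕ → ℂ) : AkL) := by
        cases o with
        | none =>
          rw [MvPolynomial.optionEquivRight_X_none, MvPolynomial.map_C, hevdef,
            MvPolynomial.coe_eval₂Hom, MvPolynomial.eval₂_C, akIota_alg, akEps_apply]
          simp
        | some i =>
          rw [MvPolynomial.optionEquivRight_X_some, MvPolynomial.map_X, hevdef,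
            MvPolynomial.coe_eval₂Hom, MvPolynomial.eval₂_X]
          simp
      rw [this]
      simp only [MvPolynomial.aeval_X]
      rfl
  have hcomm : ev.comp (akTau akSig (fun i : Fin N => akR i)) = akShift.comp ev := by
    apply MvPolynomial.ringHom_ext
    · intro c
      simp [akTau, hevdef, akIota_sig]
    · intro i
      simp only [akTau, hevdef, RingHom.comp_apply, MvPolynomial.coe_eval₂Hom,
        MvPolynomial.eval₂_X, MvPolynomial.eval₂_add, MvPolynomial.eval₂_C]
      rw [akIota_R, akShift_coe]
      refine Germ.coe_eq.mpr ?_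
      filter_upwards [hy i] with m hm
      exact hm.symm
  obtain ⟨c, hc, hc0, u, hu⟩ := ak_shift_main akSig (fun i : Fin N => akR i) (RingHom.ker ev)
    (by
      intro hbot
      apply hQ0
      have : Q ∈ RingHom.ker ev := by
        rw [RingHom.mem_ker, hQ, hevQ P]
        exact Germ.coe_eq.mpr hev
      rw [hbot] at this
      simpa using this)
    (RingHom.ker_ne_top ev)
    (by
      intro P hP
      rw [RingHom.mem_ker] at hP ⊢
      have := congrArg (fun f => f P) hcomm
      simp only [RingHom.comp_apply] at this
      rw [this, hP, map_zero])
  exact ak_rat_contra N c hc hc0 u hu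

end GermPart

section Combine

theorem ak_combine {k R : Type*} [Field k] [CharZero k] [CommRing R] [IsDomain R] [Algebra k R]
    (D : Derivation k R R) (ζ ζ' a b ψ : R) (hζ : Transcendental k ζ) (hζ' : Transcendental k ζ')
    (hD : D ζ = 1) (hD' : D ζ' = 1) (n : ℕ)
    (ha : ¬ AlgebraicIndependent k
      (fun i : Fin (n + 2) => if i.val = 0 then ζ else D^[i.val - 1] a))
    (hb : ¬ AlgebraicIndependent k
      (fun i : Fin (n + 2) => if i.val = 0 then ζ' else D^[i.val - 1] b))
    (hab : a + b ≠ 0) (hψ : (a + b) * ψ = D (a + b)) :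
    ∃ (N : ℕ) (P : MvPolynomial (Option (Fin N)) k), P ≠ 0 ∧
      MvPolynomial.aeval (fun o : Option (Fin N) => o.elim ζ (fun i => D^[(i : ℕ)] ψ)) P = 0 := by
  obtain ⟨T₁, hf₁, hT₁, ha₁⟩ := ak_finite D ζ a hζ hD n ha
  obtain ⟨T₂, hf₂, hT₂, hb₂⟩ := ak_finite D ζ' b hζ' hD' n hb
  set T := insert ζ (T₁ ∪ T₂) with hTdef
  have hs₁ : T₁ ⊆ T := fun x hx => Or.inr (Or.inl hx)
  have hs₂ : T₂ ⊆ T := fun x hx => Or.inr (Or.inr hx)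
  have hfin : T.Finite := (hf₁.union hf₂).insert ζ
  have hT : ∀ t ∈ T, IsAlgebraic (Algebra.adjoin k T) (D t) := by
    rintro t (rfl | h | h)
    · rw [hD]; exact isAlgebraic_one
    · exact ak_mono hs₁ (hT₁ t h)
    · exact ak_mono hs₂ (hT₂ t h)
  have hg : IsAlgebraic (Algebra.adjoin k T) (a + b) := (ak_mono hs₁ ha₁).add (ak_mono hs₂ hb₂)
  have hψa : IsAlgebraic (Algebra.adjoin k T) ψ := by
    refine IsAlgebraic.of_mul (mem_nonZeroDivisors_of_ne_zero hab) hg ?_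
    rw [hψ]; exact ak_deriv_alg D T hT _ hg
  obtain ⟨N, hN⟩ := ak_dep_of_finite (k := k) T hfin
  have hdep := hN (fun o : Option (Fin N) => o.elim ζ (fun i => D^[(i : ℕ)] ψ)) (by
    rintro (_ | i)
    · exact isAlgebraic_algebraMap
        (⟨ζ, Algebra.subset_adjoin (Set.mem_insert _ _)⟩ : Algebra.adjoin k T)
    · exact ak_iter D T hT ψ hψa i)
  rw [algebraicIndependent_iff] at hdep
  push Not at hdep
  obtain ⟨P, h1, h2⟩ := hdep
  exact ⟨N, P, h2, h1⟩

end Combine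

section Taylor

open Filter Topology

/-- Taylor series at `z₀`. -/
noncomputable def akT (z₀ : ℂ) (f : ℂ → ℂ) : PowerSeries ℂ :=
  PowerSeries.mk fun n => iteratedDeriv n f z₀ / (n.factorial : ℂ)

theorem akT_congr {z₀ : ℂ} {f g : ℂ → ℂ} (h : f =ᶠ[𝓝 z₀] g) : akT z₀ f = akT z₀ g := by
  ext n
  simp [akT, h.iteratedDeriv_eq]

theorem akT_const (z₀ c : ℂ) : akT z₀ (fun _ => c) = algebraMap ℂ (PowerSeries ℂ) c := by
  ext n
  rw [PowerSeries.algebraMap_apply, PowerSeries.coeff_C]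
  simp [akT, iteratedDeriv_const]
  split_ifs with h <;> simp [h]

theorem akT_add {z₀ : ℂ} {f g : ℂ → ℂ} (hf : AnalyticAt ℂ f z₀) (hg : AnalyticAt ℂ g z₀) :
    akT z₀ (fun z => f z + g z) = akT z₀ f + akT z₀ g := by
  ext n
  simp only [akT, PowerSeries.coeff_mk, map_add]
  rw [iteratedDeriv_fun_add hf.contDiffAt hg.contDiffAt, add_div]

theorem akT_mul {z₀ : ℂ} {f g : ℂ → ℂ} (hf : AnalyticAt ℂ f z₀) (hg : AnalyticAt ℂ g z₀) :
    akT z₀ (fun z => f z * g z) = akT z₀ f * akT z₀ g := by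
  ext n
  rw [PowerSeries.coeff_mul]
  simp only [akT, PowerSeries.coeff_mk]
  rw [iteratedDeriv_fun_mul hf.contDiffAt hg.contDiffAt,
    Finset.Nat.sum_antidiagonal_eq_sum_range_succ_mk, Finset.sum_div]
  apply Finset.sum_congr rfl
  intro i hi
  have hi' : i ≤ n := Nat.lt_succ_iff.mp (Finset.mem_range.mp hi)
  rw [Nat.cast_choose ℂ hi']
  have h1 : (n.factorial : ℂ) ≠ 0 := Nat.cast_ne_zero.mpr (Nat.factorial_ne_zero _)
  have h2 : (i.factorial : ℂ) ≠ 0 := Nat.cast_ne_zero.mpr (Nat.factorial_ne_zero _)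
  have h3 : ((n - i).factorial : ℂ) ≠ 0 := Nat.cast_ne_zero.mpr (Nat.factorial_ne_zero _)
  field_simp

theorem akT_deriv (z₀ : ℂ) (f : ℂ → ℂ) :
    PowerSeries.derivative ℂ (akT z₀ f) = akT z₀ (deriv f) := by
  ext n
  rw [PowerSeries.coeff_derivative]
  simp only [akT, PowerSeries.coeff_mk]
  rw [iteratedDeriv_succ', Nat.factorial_succ]
  have h1 : (n.factorial : ℂ) ≠ 0 := Nat.cast_ne_zero.mpr (Nat.factorial_ne_zero _)
  have h2 : (n : ℂ) + 1 ≠ 0 := Nat.cast_add_one_ne_zero n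
  push_cast
  field_simp

theorem akT_iter (z₀ : ℂ) (f : ℂ → ℂ) (n : ℕ) :
    (PowerSeries.derivative ℂ)^[n] (akT z₀ f) = akT z₀ (iteratedDeriv n f) := by
  induction n with
  | zero => simp
  | succ n ih => rw [Function.iterate_succ_apply', ih, akT_deriv, iteratedDeriv_succ]

theorem akT_eq_zero {z₀ : ℂ} {f : ℂ → ℂ} (hf : AnalyticAt ℂ f z₀) (h : akT z₀ f = 0) :
    f =ᶠ[𝓝 z₀] 0 := by
  have h1 := hf.hasFPowerSeriesAt
  have h2 : (fun n => iteratedDeriv n f z₀ / (n.factorial : ℂ)) = 0 := by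
    funext n
    have := congrArg (PowerSeries.coeff n) h
    simpa [akT] using this
  rw [h2] at h1
  have h3 : FormalMultilinearSeries.ofScalars ℂ (0 : ℕ → ℂ) =
      (0 : FormalMultilinearSeries ℂ ℂ ℂ) := by
    ext n; simp [FormalMultilinearSeries.ofScalars]
  rw [h3] at h1
  exact h1.eventually_eq_zero

theorem akT_aeval {κ : Type*} (z₀ : ℂ) (F : κ → ℂ → ℂ) (hF : ∀ i, AnalyticAt ℂ (F i) z₀)
    (P : MvPolynomial κ ℂ) :
    AnalyticAt ℂ (fun z => MvPolynomial.aeval (fun i => F i z) P) z₀ ∧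
    akT z₀ (fun z => MvPolynomial.aeval (fun i => F i z) P) =
      MvPolynomial.aeval (fun i => akT z₀ (F i)) P := by
  induction P using MvPolynomial.induction_on with
  | C a =>
    simp only [MvPolynomial.aeval_C]
    exact ⟨analyticAt_const, akT_const z₀ _⟩
  | add p q hp hq =>
    simp only [map_add]
    exact ⟨hp.1.fun_add hq.1, by rw [akT_add hp.1 hq.1, hp.2, hq.2]⟩
  | mul_X p i hp =>
    simp only [map_mul, MvPolynomial.aeval_X]
    exact ⟨hp.1.fun_mul (hF i), by rw [akT_mul hp.1 (hF i), hp.2]⟩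

theorem ak_not_indep {κ : Type*} (z₀ : ℂ) (F : κ → ℂ → ℂ) (hF : ∀ i, AnalyticAt ℂ (F i) z₀)
    (P : MvPolynomial κ ℂ) (hP : P ≠ 0)
    (h : ∀ᶠ z in 𝓝 z₀, MvPolynomial.eval (fun i => F i z) P = 0) :
    ¬ AlgebraicIndependent ℂ (fun i => akT z₀ (F i)) := by
  rw [algebraicIndependent_iff]
  intro hcon
  apply hP
  apply hcon
  rw [← (akT_aeval z₀ F hF P).2]
  have : akT z₀ (fun z => MvPolynomial.aeval (fun i => F i z) P) = akT z₀ (fun _ => 0) :=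
    akT_congr (by
      filter_upwards [h] with z hz
      rw [← hz, MvPolynomial.aeval_eq_eval])
  rw [this, akT_const, map_zero]

theorem ak_transc (z₀ c : ℂ) : Transcendental ℂ (akT z₀ (fun z => z - c)) := by
  rw [transcendental_iff]
  intro p hp
  have han : AnalyticAt ℂ (fun z : ℂ => z - c) z₀ := analyticAt_id.fun_sub analyticAt_const
  have key : ∀ p : Polynomial ℂ, AnalyticAt ℂ (fun z => p.eval (z - c)) z₀ ∧
      akT z₀ (fun z => p.eval (z - c)) = Polynomial.aeval (akT z₀ (fun z => z - c)) p := by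
    intro p
    have h := akT_aeval (κ := Unit) z₀ (fun _ z => z - c) (fun _ => han)
      (Polynomial.aeval (MvPolynomial.X ()) p)
    have e1 : ∀ z : ℂ, MvPolynomial.aeval (fun _ : Unit => z - c)
        (Polynomial.aeval (MvPolynomial.X () : MvPolynomial Unit ℂ) p) = p.eval (z - c) := by
      intro z
      rw [← Polynomial.aeval_algHom_apply, MvPolynomial.aeval_X, Polynomial.coe_aeval_eq_eval]
    simp only [e1] at h
    refine ⟨h.1, h.2.trans ?_⟩
    rw [← Polynomial.aeval_algHom_apply, MvPolynomial.aeval_X]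
  have h0 := akT_eq_zero (key p).1 ((key p).2.trans hp)
  by_contra hne
  have hfin : Set.Finite {x : ℂ | p.IsRoot x} := Polynomial.finite_setOfPred_isRoot hne
  have hinf : {z : ℂ | p.eval (z - c) = 0}.Infinite := infinite_of_mem_nhds z₀ h0
  apply hinf
  exact hfin.preimage (f := fun z => z - c) (sub_left_injective.injOn)

end Taylor

section FinalPart

open Filter Topology

theorem ak_iter_an {f : ℂ → ℂ} {z : ℂ} (h : AnalyticAt ℂ f z) (n : ℕ) :
    AnalyticAt ℂ (iteratedDeriv n f) z := by
  rw [iteratedDeriv_eq_iterate]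
  exact h.iterated_deriv n

theorem ak_half_open : IsOpen {z : ℂ | 0 < z.re} :=
  isOpen_lt continuous_const Complex.continuous_re

/-- the shifted Gamma function -/
noncomputable def akG (z : ℂ) : ℂ := Complex.Gamma (z + 1)

/-- its logarithmic derivative -/
noncomputable def akPhi (z : ℂ) : ℂ := deriv akG z / akG z

theorem ak_gamma_an {z : ℂ} (hz : 0 < z.re) : AnalyticAt ℂ Complex.Gamma z := by
  have hd : DifferentiableOn ℂ Complex.Gamma {z : ℂ | 0 < z.re} := by
    intro w hw
    apply DifferentiableAt.differentiableWithinAt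
    apply Complex.differentiableAt_Gamma
    intro m hm
    have hw' : 0 < w.re := hw
    rw [hm] at hw'
    simp at hw'
    have : (0 : ℝ) ≤ (m : ℝ) := Nat.cast_nonneg m
    linarith
  exact hd.analyticAt (ak_half_open.mem_nhds hz)

theorem akG_an {z : ℂ} (hz : 0 < z.re) : AnalyticAt ℂ akG z := by
  have h1 : AnalyticAt ℂ Complex.Gamma (z + 1) := ak_gamma_an (by simp; linarith)
  exact h1.comp_of_eq (analyticAt_id.fun_add analyticAt_const) rfl

theorem akG_ne {z : ℂ} (hz : 0 < z.re) : akG z ≠ 0 :=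
  Complex.Gamma_ne_zero_of_re_pos (by simp; linarith)

theorem akPhi_an {z : ℂ} (hz : 0 < z.re) : AnalyticAt ℂ akPhi z :=
  (akG_an hz).deriv.fun_div (akG_an hz) (akG_ne hz)

theorem akPhi_rec {z : ℂ} (hz : 0 < z.re) : akPhi (z + 1) = akPhi z + (z + 1)⁻¹ := by
  have hne : z + 1 ≠ 0 := by
    intro h
    have := congrArg Complex.re h
    simp at this
    linarith
  have hd : ∀ w, deriv akG w = deriv Complex.Gamma (w + 1) := fun w => by
    have : akG = fun z => Complex.Gamma (z + 1) := rfl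
    rw [this, deriv_comp_add_const]
  have hG := akG_ne hz
  unfold akPhi
  rw [hd, hd]
  unfold akG at *
  rw [Complex.deriv_Gamma_add_one _ hne, Complex.Gamma_add_one _ hne]
  field_simp
  ring

theorem akPhi_iter {z : ℂ} (hz : 0 < z.re) (i : ℕ) :
    iteratedDeriv i akPhi (z + 1) = iteratedDeriv i akPhi z +
      (-1) ^ i * (i.factorial : ℂ) / (z + 1) ^ (i + 1) := by
  have hne : z + 1 ≠ 0 := by
    intro h
    have := congrArg Complex.re h
    simp at this
    linarith
  have h1 : (fun w => akPhi (w + 1)) =ᶠ[𝓝 z] (fun w => akPhi w + (fun u => Inv.inv (u + 1)) w) := by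
    filter_upwards [ak_half_open.mem_nhds hz] with w hw
    exact akPhi_rec hw
  have h2 := h1.iteratedDeriv_eq i
  have han : AnalyticAt ℂ (fun u : ℂ => Inv.inv (u + 1)) z :=
    (analyticAt_id.fun_add analyticAt_const).fun_inv hne
  rw [iteratedDeriv_fun_add (akPhi_an hz).contDiffAt han.contDiffAt,
    iteratedDeriv_comp_add_const, iteratedDeriv_comp_add_const] at h2
  beta_reduce at h2
  rw [h2, iteratedDeriv_eq_iterate (f := Inv.inv), iter_deriv_inv]
  congr 1
  rw [div_eq_mul_inv]
  congr 1
  rw [← zpow_natCast, ← zpow_neg]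
  congr 1
  push_cast
  ring

theorem akPhi_transc (N : ℕ) (P : MvPolynomial (Option (Fin N)) ℂ) (hP : P ≠ 0) (z₀ : ℂ)
    (hz₀ : 0 < z₀.re)
    (h : MvPolynomial.aeval (fun o : Option (Fin N) => o.elim (akT z₀ (fun z => z - 0))
      (fun i => (PowerSeries.derivative ℂ)^[(i : ℕ)] (akT z₀ akPhi))) P = 0) : False := by
  let F : Option (Fin N) → ℂ → ℂ := fun o => o.elim (fun z => z - 0)
    (fun i => iteratedDeriv (i : ℕ) akPhi)
  have hF : ∀ z : ℂ, 0 < z.re → ∀ o, AnalyticAt ℂ (F o) z := by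
    intro z hz o
    cases o with
    | none => exact analyticAt_id.fun_sub analyticAt_const
    | some i => exact ak_iter_an (akPhi_an hz) _
  have h1 := akT_aeval z₀ F (hF z₀ hz₀) P
  have h2 : (fun o : Option (Fin N) => o.elim (akT z₀ (fun z => z - 0))
      (fun i => (PowerSeries.derivative ℂ)^[(i : ℕ)] (akT z₀ akPhi))) =
      fun o => akT z₀ (F o) := by
    funext o
    cases o with
    | none => rfl
    | some i => exact akT_iter z₀ akPhi i
  rw [h2] at h
  have h3 := akT_eq_zero h1.1 (h1.2.trans h)
  have h4 : AnalyticOnNhd ℂ (fun z => MvPolynomial.aeval (fun o => F o z) P) {z : ℂ | 0 < z.re} :=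
    fun z hz => (akT_aeval z F (hF z hz) P).1
  have h5 := h4.eqOn_zero_of_preconnected_of_eventuallyEq_zero
    (convex_halfSpace_re_gt 0).isPreconnected hz₀ h3
  have hpos : ∀ m : ℕ, 1 ≤ m → 0 < ((m : ℂ)).re := by
    intro m hm
    simp
    omega
  refine ak_holder N (fun i m => iteratedDeriv (i : ℕ) akPhi (m : ℂ)) ?_ P hP ?_
  · intro i
    filter_upwards [eventually_ge_atTop 1] with m hm
    push_cast
    exact akPhi_iter (hpos m hm) i
  · filter_upwards [eventually_ge_atTop 1] with m hm
    have h6 := h5 (hpos m hm)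
    have h7 : (fun o : Option (Fin N) => o.elim (m : ℂ)
        (fun i => iteratedDeriv (i : ℕ) akPhi (m : ℂ))) = fun o => F o (m : ℂ) := by
      funext o
      cases o with
      | none => simp [F]
      | some i => rfl
    rw [h7]
    exact h6

theorem ak_not_indep_shift (z₀ c : ℂ) (A : ℂ → ℂ) (hA : AnalyticAt ℂ A (z₀ - c)) (n : ℕ)
    (P : MvPolynomial (Fin (n + 2)) ℂ) (hP : P ≠ 0)
    (h : ∀ z : ℂ, AnalyticAt ℂ A z →
      MvPolynomial.eval
        (fun i : Fin (n + 2) => if i.val = 0 then z else iteratedDeriv (i.val - 1) A z) P = 0) :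
    ¬ AlgebraicIndependent ℂ (fun i : Fin (n + 2) => if i.val = 0 then akT z₀ (fun z => z - c)
      else (PowerSeries.derivative ℂ)^[i.val - 1] (akT z₀ (fun z => A (z - c)))) := by
  have hsub : AnalyticAt ℂ (fun z : ℂ => z - c) z₀ := analyticAt_id.fun_sub analyticAt_const
  have hAc : AnalyticAt ℂ (fun z => A (z - c)) z₀ := hA.comp_of_eq hsub rfl
  let F : Fin (n + 2) → ℂ → ℂ := fun i => if i.val = 0 then (fun z => z - c)
    else iteratedDeriv (i.val - 1) (fun z => A (z - c))
  have hF : ∀ i, AnalyticAt ℂ (F i) z₀ := by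
    intro i
    by_cases hi : i.val = 0
    · simp only [F, hi, if_true]; exact hsub
    · simp only [F, hi, if_false]; exact ak_iter_an hAc _
  have key := ak_not_indep z₀ F hF P hP ?_
  · convert key using 2
    funext i
    by_cases hi : i.val = 0
    · simp only [F, hi, if_true]
    · simp only [F, hi, if_false]; exact akT_iter _ _ _
  · have hev : ∀ᶠ z in 𝓝 z₀, AnalyticAt ℂ A (z - c) :=
      hsub.continuousAt.eventually hA.eventually_analyticAt
    filter_upwards [hev] with z hz
    rw [← h _ hz]
    congr 2
    funext i
    by_cases hi : i.val = 0
    · simp only [F, hi, if_true]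
    · simp only [F, hi, if_false, iteratedDeriv_comp_sub_const]

theorem akT_sub_deriv (z₀ c : ℂ) :
    PowerSeries.derivative ℂ (akT z₀ (fun z => z - c)) = 1 := by
  rw [akT_deriv]
  have : deriv (fun z : ℂ => z - c) = fun _ => 1 := by
    funext z
    simp
  rw [this, akT_const, map_one]

theorem ak_point (A : ℂ → ℂ) (hmero : MeromorphicOn A Set.univ) :
    ∃ z₀ : ℂ, 0 < z₀.re ∧ AnalyticAt ℂ A z₀ ∧ AnalyticAt ℂ A (z₀ - 1) := by
  have h1 := (hmero 1 trivial).eventually_analyticAt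
  have h0 := (hmero 0 trivial).eventually_analyticAt
  have ht : Tendsto (fun z : ℂ => z - 1) (𝓝[≠] 1) (𝓝[≠] 0) := by
    apply tendsto_nhdsWithin_of_tendsto_nhds_of_eventually_within
    · have : Tendsto (fun z : ℂ => z - 1) (𝓝 1) (𝓝 (1 - 1)) :=
        (continuous_id.sub continuous_const).tendsto 1
      rw [sub_self] at this
      exact this.mono_left nhdsWithin_le_nhds
    · filter_upwards [self_mem_nhdsWithin] with z hz
      exact sub_ne_zero.mpr hz
  have h2 : ∀ᶠ z : ℂ in 𝓝[≠] 1, 0 < z.re :=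
    nhdsWithin_le_nhds (ak_half_open.mem_nhds (by simp))
  obtain ⟨z, ha, hb, hc⟩ := (h1.and ((ht.eventually h0).and h2)).exists
  exact ⟨z, hc, ha, hb⟩

end FinalPart

/-- Every function meromorphic on ℂ satisfying the alternating Kurepa functional
equation `A z + A (z-1) = Γ (z+1)` (wherever all three terms are analytic) is
differentially transcendental. -/
theorem alternatingKurepa_diffTranscendental (A : ℂ → ℂ)
    (hmero : MeromorphicOn A Set.univ)
    (hfe : ∀ z : ℂ, AnalyticAt ℂ A z → AnalyticAt ℂ A (z - 1) →
      AnalyticAt ℂ Complex.Gamma (z + 1) → A z + A (z - 1) = Complex.Gamma (z + 1)) :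
    ¬ DifferentiallyAlgebraic A := by
  rintro ⟨n, P, hP, h⟩
  obtain ⟨z₀, hz₀, hA0, hA1⟩ := ak_point A hmero
  have hA0' : AnalyticAt ℂ A (z₀ - 0) := by rwa [sub_zero]
  have hsub : ∀ c, AnalyticAt ℂ (fun z : ℂ => z - c) z₀ :=
    fun c => analyticAt_id.fun_sub analyticAt_const
  have hc0 : AnalyticAt ℂ (fun z => A (z - 0)) z₀ := hA0'.comp_of_eq (hsub 0) rfl
  have hc1 : AnalyticAt ℂ (fun z => A (z - 1)) z₀ := hA1.comp_of_eq (hsub 1) rfl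
  have hsum : akT z₀ (fun z => A (z - 0)) + akT z₀ (fun z => A (z - 1)) = akT z₀ akG := by
    rw [← akT_add hc0 hc1]
    apply akT_congr
    filter_upwards [hA0.eventually_analyticAt,
      (hsub 1).continuousAt.eventually hA1.eventually_analyticAt,
      ak_half_open.mem_nhds hz₀] with z h0 h1 hz
    have hz' : 0 < z.re := hz
    rw [sub_zero]
    exact hfe z h0 h1 (ak_gamma_an (by simp; linarith))
  have hne : akT z₀ akG ≠ 0 := by
    intro h0
    exact akG_ne hz₀ (akT_eq_zero (akG_an hz₀) h0).eq_of_nhds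
  have hψ : akT z₀ akG * akT z₀ akPhi = PowerSeries.derivative ℂ (akT z₀ akG) := by
    rw [akT_deriv, ← akT_mul (akG_an hz₀) (akPhi_an hz₀)]
    apply akT_congr
    filter_upwards [ak_half_open.mem_nhds hz₀] with z hz
    exact mul_div_cancel₀ _ (akG_ne hz)
  obtain ⟨N, Q, hQ, hQ0⟩ := ak_combine (PowerSeries.derivative ℂ) _ _ _ _ (akT z₀ akPhi)
    (ak_transc z₀ 0) (ak_transc z₀ 1) (akT_sub_deriv z₀ 0) (akT_sub_deriv z₀ 1) n
    (ak_not_indep_shift z₀ 0 A hA0' n P hP h) (ak_not_indep_shift z₀ 1 A hA1 n P hP h)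
    (by rw [hsum]; exact hne) (by rw [hsum]; exact hψ)
  exact akPhi_transc N Q hQ z₀ hz₀ hQ0
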